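/- Suppose a family of polynomials g_{j,k} ∈ ℂ[∂,λ] (j,k ∈ ℤ) and constants a,α,b,β ∈ ℂ satisfy g_{j,k}(∂+λ,μ)·(∂+αλ+β) − g_{j,i+k}(∂,μ)·(∂+μ+aλ+b) = ((1/2)λ−μ)·g_{i+j,k}(∂,λ+μ) for all i,j,k ∈ ℤ, with all g_{j,k} nonzero, monic in ∂, and of common ∂-degree d ∈ {0,1}. Then β = b, and: if d = 1 then g_{j,k}(∂,λ) = ∂+(2a−1)λ+b and α = a−1/2; if d = 0 then g_{j,k}(∂,λ) = 1 and α = a+1/2. -/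

import Mathlib

open Polynomial

/-- Evaluation of a two-variable polynomial `f ∈ ℂ[λ][∂]` at `∂ = x`, `λ = l`:
the outer variable is `∂`, the coefficients are polynomials in `λ`. -/
noncomputable def ev (f : Polynomial (Polynomial ℂ)) (x l : ℂ) : ℂ :=
  (f.map (Polynomial.evalRingHom l)).eval x

/-- suppose `g_{j,k} ∈ ℂ[∂,λ]` (`j,k ∈ ℤ`) and `a,α,b,β ∈ ℂ` satisfy
`g_{j,k}(∂+λ,μ)·(∂+αλ+β) − g_{j,i+k}(∂,μ)·(∂+μ+aλ+b) = ((1/2)λ−μ)·g_{i+j,k}(∂,λ+μ)`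
for all `i,j,k ∈ ℤ`, with all `g_{j,k}` nonzero, monic in `∂`, of common `∂`-degree
`d ∈ {0,1}`.  Then `β = b`, and: if `d = 1` then `g_{j,k}(∂,λ) = ∂+(2a−1)λ+b` and
`α = a−1/2`; if `d = 0` then `g_{j,k} = 1` and `α = a+1/2`. -/
theorem stmt16 (a α b β : ℂ) (d : ℕ) (hd : d = 0 ∨ d = 1)
    (g : ℤ → ℤ → Polynomial (Polynomial ℂ))
    (hmonic : ∀ j k : ℤ, (g j k).Monic)
    (hdeg : ∀ j k : ℤ, (g j k).natDegree = d)
    (h : ∀ (i j k : ℤ) (x l m : ℂ),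
      ev (g j k) (x + l) m * (x + α*l + β) - ev (g j (i+k)) x m * (x + m + a*l + b)
        = ((1/2)*l - m) * ev (g (i+j) k) x (l + m)) :
    β = b
    ∧ (d = 1 →
        (∀ (j k : ℤ) (x l : ℂ), ev (g j k) x l = x + (2*a - 1)*l + b) ∧ α = a - 1/2)
    ∧ (d = 0 → (∀ (j k : ℤ) (x l : ℂ), ev (g j k) x l = 1) ∧ α = a + 1/2) := by
  rcases hd with rfl | rfl
  · have h1 : ∀ j k : ℤ, g j k = 1 := fun j k =>
      Polynomial.eq_one_of_monic_natDegree_zero (hmonic j k) (hdeg j k)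
    have e1 : ∀ (j k : ℤ) (x l : ℂ), ev (g j k) x l = 1 := by
      intro j k x l
      rw [h1]; simp [ev]
    simp only [e1] at h
    have hb : β = b := by
      have := h 0 0 0 0 0 0
      linear_combination this
    refine ⟨hb, fun h => absurd h (by norm_num), fun _ => ⟨e1, ?_⟩⟩
    have := h 0 0 0 0 1 0
    linear_combination this - hb
  · have e1 : ∀ (j k : ℤ) (x l : ℂ), ev (g j k) x l = x + ((g j k).coeff 0).eval l := by
      intro j k x l
      have h2 : g j k = X + C ((g j k).coeff 0) := by
        have h3 := Polynomial.eq_X_add_C_of_natDegree_le_one (le_of_eq (hdeg j k))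
        have h4 : (g j k).coeff 1 = 1 := by
          have := (hmonic j k).coeff_natDegree
          rwa [hdeg] at this
        rw [h4] at h3
        simpa using h3
      conv_lhs => rw [h2]
      simp [ev]
    obtain ⟨p, hp⟩ : ∃ p : ℤ → ℤ → ℂ → ℂ, ∀ j k x l, ev (g j k) x l = x + p j k l :=
      ⟨fun j k l => ((g j k).coeff 0).eval l, e1⟩
    simp only [hp] at h ⊢
    -- coefficient of `x`
    have hx : ∀ (i j k : ℤ) (l m : ℂ),
        p j k m + l * (1/2 + α - a) + β - b - p j (i+k) m = 0 := by
      intro i j k l m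
      linear_combination h i j k 1 l m - h i j k 0 l m
    have hb : β = b := by
      have := hx 0 0 0 0 0
      rw [zero_add] at this
      linear_combination this
    have ha : α = a - 1/2 := by
      have := hx 0 0 0 1 0
      rw [zero_add] at this
      linear_combination this - hb
    subst hb
    have hk : ∀ (j k : ℤ) (m : ℂ), p j k m = p j 0 m := by
      intro j k m
      have := hx k j 0 0 m
      rw [add_zero] at this
      linear_combination -this
    have hc : ∀ (s j : ℤ) (l m : ℂ),
        l * (α * l + β) - p j 0 m * (l/2 + m) = (l/2 - m) * p s 0 (l + m) := by
      intro s j l m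
      have := h (s - j) j 0 0 l m
      rw [hk j (s - j + 0), sub_add_cancel] at this
      linear_combination this - l * p j 0 m * ha
    have h1 : ∀ (s j : ℤ) (l : ℂ), l ≠ 0 → p s 0 l = 2 * α * l + 2 * β - p j 0 0 := by
      intro s j l hl
      have := hc s j l 0
      simp only [add_zero] at this
      apply mul_left_cancel₀ hl
      linear_combination -2 * this
    have h2 : ∀ (s j : ℤ) (m : ℂ), m ≠ 0 → p j 0 m = 2 * α * m - 2 * β + 3 * p s 0 0 := by
      intro s j m hm
      have := hc s j (-m) m
      rw [neg_add_cancel] at this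
      apply mul_left_cancel₀ hm
      linear_combination -2 * this
    have h0 : ∀ j, p j 0 0 = β := by
      intro j
      linear_combination (h1 j j 1 one_ne_zero - h2 j j 1 one_ne_zero) / 4
    refine ⟨rfl, fun _ => ⟨fun j k x l => ?_, ha⟩, fun h => absurd h (by norm_num)⟩
    rw [hk j k]
    by_cases hl : l = 0
    · subst hl
      rw [h0]; ring
    · rw [h1 j j l hl, h0, ha]; ring
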